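/- Let R be a φ-ring. Then R is a φ-IF ring if and only if R is nonnil-coherent and for every maximal ideal m of R the localization R_m is a φ-IF ring (i.e., R_m is a φ-ring and every nonnil-injective R_m-module is φ-flat over R_m). -/

import Mathlib

open CategoryTheory

universe u

/-- A commutative ring is a `φ`-ring if its nilradical is a divided prime ideal. -/
def IsPhiRing (R : Type u) [CommRing R] : Prop :=
  (nilradical R).IsPrime ∧ ∀ x : R, x ∉ nilradical R → nilradical R ≤ Ideal.span {x}

/-- A ring is nonnil-coherent if every finitely generated nonnil ideal is
finitely presented as a module. -/
def IsNonnilCoherent (R : Type u) [CommRing R] : Prop :=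
  ∀ I : Ideal R, I.FG → ¬ I ≤ nilradical R → Module.FinitePresentation R I

/-- A module is φ-torsion if every element is annihilated by a nonnil ideal. -/
def IsPhiTorsion (R : Type u) [CommRing R] (T : Type u) [AddCommGroup T] [Module R T] : Prop :=
  ∀ t : T, ∃ I : Ideal R, ¬ I ≤ nilradical R ∧ ∀ a ∈ I, a • t = 0

/-- A module `M` is φ-flat if `Tor₁ᴿ(T, M) = 0` for every φ-torsion module `T`. -/
def IsPhiFlat (R : Type u) [CommRing R] (M : Type u) [AddCommGroup M] [Module R M] : Prop :=
  ∀ (T : Type u) [AddCommGroup T] [Module R T], IsPhiTorsion R T →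
    Subsingleton (((Tor (ModuleCat.{u} R) 1).obj (ModuleCat.of R T)).obj (ModuleCat.of R M))

/-- A module `M` is nonnil-injective if `Ext¹ᴿ(T, M) = 0` for every φ-torsion module `T`. -/
def IsNonnilInjective (R : Type u) [CommRing R] (M : Type u) [AddCommGroup M] [Module R M] :
    Prop :=
  ∀ (T : Type u) [AddCommGroup T] [Module R T], IsPhiTorsion R T →
    Subsingleton (((Ext R (ModuleCat.{u} R) 1).obj (Opposite.op (ModuleCat.of R T))).obj
      (ModuleCat.of R M))

/-- A module `M` is nonnil-FP-injective if `Ext¹ᴿ(T, M) = 0` for every finitely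
presented φ-torsion module `T`. -/
def IsNonnilFPInjective (R : Type u) [CommRing R] (M : Type u) [AddCommGroup M] [Module R M] :
    Prop :=
  ∀ (T : Type u) [AddCommGroup T] [Module R T], Module.FinitePresentation R T →
    IsPhiTorsion R T →
    Subsingleton (((Ext R (ModuleCat.{u} R) 1).obj (Opposite.op (ModuleCat.of R T))).obj
      (ModuleCat.of R M))

/-- A φ-IF ring: a φ-ring in which every nonnil-injective module is φ-flat. -/
def IsPhiIFRing (S : Type u) [CommRing S] : Prop :=
  IsPhiRing S ∧
    ∀ (M : Type u) [AddCommGroup M] [Module S M], IsNonnilInjective S M → IsPhiFlat S M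

open TensorProduct

/-!
Write `M⁺` for the character module of `M`. By Baer's criterion and the symmetry of `Tor`,
nonnil-injectivity and φ-flatness can be tested on the inclusions `I → R` of nonnil ideals, so `M`
is φ-flat if and only if `M⁺` is nonnil-injective.

If every nonnil-injective module is φ-flat, then so is every power `(R⁺⁺)^X`. Hence for a finitely
generated nonnil ideal `I` the maps `I ⊗ (R⁺⁺)^X → (I ⊗ R⁺⁺)^X` are injective, and since `R → R⁺⁺`
is pure, this forces `I` to be finitely presented. Over a localization `A` of `R` the nonnil ideals
are the extensions of nonnil ideals of `R`, so both properties of an `A`-module can be tested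
over `R`.

Conversely, let `E` be nonnil-injective over a nonnil-coherent ring. Maps from finitely presented
modules into `E_m` lift to `E` up to a denominator, so maps into `E_m` extend from finitely
generated nonnil ideals `I` of `R_m`. As these ideals are finitely presented, `I ⊗ E_m⁺` embeds in
`Hom(I, E_m)⁺`, which makes `E_m⁺` φ-flat. Thus `E_m⁺⁺` is φ-flat, so is its pure submodule `E_m`,
and φ-flatness is a local property.
-/

section Exact

variable {R A B C D : Type*} [CommRing R] [AddCommGroup A] [AddCommGroup B] [AddCommGroup C]
  [AddCommGroup D] [Module R A] [Module R B] [Module R C] [Module R D]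

theorem exact_comp_iff_injective {f : A →ₗ[R] B} {g : B →ₗ[R] C} (j : C →ₗ[R] D)
    (hfg : Function.Exact f g) (hg : Function.Surjective g) :
    Function.Exact f (j ∘ₗ g) ↔ Function.Injective j := by
  refine ⟨fun h ↦ (injective_iff_map_eq_zero j).2 fun c hc ↦ ?_,
    fun h ↦ hfg.comp_injective j h (map_zero j)⟩
  obtain ⟨b, rfl⟩ := hg c
  exact (hfg b).2 ((h b).1 hc)

theorem exact_comp_iff_surjective {f : A →ₗ[R] B} {g : B →ₗ[R] C} (p : D →ₗ[R] A)
    (hfg : Function.Exact f g) (hf : Function.Injective f) :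
    Function.Exact (f ∘ₗ p) g ↔ Function.Surjective p := by
  refine ⟨fun h a ↦ ?_, fun h ↦ ?_⟩
  · obtain ⟨d, hd⟩ := (h (f a)).1 (hfg.apply_apply_eq_zero a)
    exact ⟨d, hf hd⟩
  · exact h.comp_exact_iff_exact.2 hfg

end Exact

section Extension

variable {R : Type*} [CommRing R] {L F M : Type*} [AddCommGroup L] [AddCommGroup F]
  [AddCommGroup M] [Module R L] [Module R F] [Module R M]

theorem exists_linearPMap_ge_mem_domain (g : F →ₗ.[R] M) (y : F)
    (h : Function.Surjective ((g.domain.colon {y}).subtype.lcomp R M)) :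
    ∃ g' : F →ₗ.[R] M, g ≤ g' ∧ y ∈ g'.domain := by
  have hcolon (r : R) : r ∈ g.domain.colon {y} ↔ r • y ∈ g.domain :=
    Submodule.mem_colon_singleton
  obtain ⟨φ, hφ⟩ := h (g.toFun ∘ₗ (LinearMap.toSpanSingleton R F y).restrict fun r ↦ (hcolon r).1)
  have hg (r : R) (hr : r • y ∈ g.domain) : g ⟨r • y, hr⟩ = r • φ 1 := by
    rw [← map_smul, smul_eq_mul, mul_one]
    exact (LinearMap.congr_fun hφ ⟨r, (hcolon r).2 hr⟩).symm
  have hann (r : R) (hr : r • y = 0) : r • φ 1 = 0 := by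
    rw [← hg r (hr ▸ zero_mem _), ← g.map_zero]
    exact congrArg g (Subtype.ext hr)
  let s := LinearPMap.mkSpanSingleton' (σ := RingHom.id R) y (φ 1) hann
  have hagree (a : g.domain) (b : s.domain) (hab : (a : F) = b) : g a = s b := by
    obtain ⟨_, ha⟩ := a
    obtain ⟨_, hb⟩ := b
    obtain ⟨r, rfl⟩ := Submodule.mem_span_singleton.1 hb
    obtain rfl : _ = r • y := hab
    rw [hg r ha]
    exact (LinearPMap.mkSpanSingleton'_apply y (φ 1) hann r hb).symm
  exact ⟨g.sup s hagree, g.left_le_sup s hagree,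
    (g.right_le_sup s hagree).1 (Submodule.mem_span_singleton_self y)⟩

theorem lcomp_surjective_of_colon_le (i : L →ₗ[R] F) (hi : Function.Injective i)
    (h : ∀ (y : F) (I : Ideal R), (LinearMap.range i).colon {y} ≤ I →
      Function.Surjective (I.subtype.lcomp R M)) :
    Function.Surjective (i.lcomp R M) := by
  intro f
  have : Fact (Function.Injective i) := ⟨hi⟩
  let g := Module.Baer.extensionOfMax i f
  have htop : g.domain = ⊤ := by
    refine Submodule.eq_top_iff'.2 fun y ↦ ?_
    obtain ⟨g', hle, hy⟩ := exists_linearPMap_ge_mem_domain g.toLinearPMap y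
      (h y _ (Submodule.colon_mono g.le le_rfl))
    let g'' : Module.Baer.ExtensionOf i f :=
      { g' with
        le := g.le.trans hle.1
        is_extension := fun m ↦ (g.is_extension m).trans (hle.2 rfl) }
    rwa [show g = g'' from (Module.Baer.extensionOfMax_is_max i f g'' hle).symm]
  exact ⟨g.toFun ∘ₗ (LinearEquiv.ofTop _ htop).symm, LinearMap.ext fun x ↦
    (g.is_extension x).symm⟩

end Extension

section Balancing

variable {R : Type*} [CommRing R] {L F T K P M : Type*} [AddCommGroup L] [AddCommGroup F]
  [AddCommGroup T] [AddCommGroup K] [AddCommGroup P] [AddCommGroup M] [Module R L] [Module R F]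
  [Module R T] [Module R K] [Module R P] [Module R M]

theorem rTensor_lTensor_apply_comm (i : L →ₗ[R] F) (j : K →ₗ[R] P) (z : L ⊗[R] K) :
    i.rTensor P (j.lTensor L z) = j.lTensor F (i.rTensor K z) := by
  simp only [← LinearMap.comp_apply, LinearMap.rTensor_comp_lTensor,
    LinearMap.lTensor_comp_rTensor]

variable {i : L →ₗ[R] F} {p : F →ₗ[R] T} {j : K →ₗ[R] P} {q : P →ₗ[R] M}

theorem rTensor_injective_of_lTensor_injective [Module.Flat R P] (hi : Function.Injective i)
    (hip : Function.Exact i p) (hp : Function.Surjective p) (hjq : Function.Exact j q)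
    (hq : Function.Surjective q) (h : Function.Injective (j.lTensor T)) :
    Function.Injective (i.rTensor M) := by
  refine (injective_iff_map_eq_zero _).2 fun z hz ↦ ?_
  obtain ⟨y, rfl⟩ := LinearMap.lTensor_surjective L hq z
  rw [rTensor_lTensor_apply_comm] at hz
  obtain ⟨k, hk⟩ := (lTensor_exact F hjq hq _).1 hz
  have hpk : p.rTensor K k = 0 := by
    refine (injective_iff_map_eq_zero _).1 h _ ?_
    rw [← rTensor_lTensor_apply_comm, hk]
    exact (rTensor_exact P hip hp).apply_apply_eq_zero y
  obtain ⟨l, rfl⟩ := (rTensor_exact K hip hp _).1 hpk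
  rw [← rTensor_lTensor_apply_comm] at hk
  rw [← Module.Flat.rTensor_preserves_injective_linearMap i hi hk]
  exact (lTensor_exact L hjq hq).apply_apply_eq_zero l

theorem rTensor_injective_iff_lTensor_injective [Module.Flat R F] [Module.Flat R P]
    (hi : Function.Injective i) (hip : Function.Exact i p) (hp : Function.Surjective p)
    (hj : Function.Injective j) (hjq : Function.Exact j q) (hq : Function.Surjective q) :
    Function.Injective (i.rTensor M) ↔ Function.Injective (j.lTensor T) := by
  refine ⟨fun h ↦ ?_, rTensor_injective_of_lTensor_injective hi hip hp hjq hq⟩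
  rw [LinearMap.lTensor_inj_iff_rTensor_inj]
  rw [← LinearMap.lTensor_inj_iff_rTensor_inj] at h
  exact rTensor_injective_of_lTensor_injective hj hjq hq hip hp h

end Balancing

section Schanuel

variable {R : Type*} [CommRing R] {L F L' F' T M : Type*} [AddCommGroup L] [AddCommGroup F]
  [AddCommGroup L'] [AddCommGroup F'] [AddCommGroup T] [AddCommGroup M] [Module R L] [Module R F]
  [Module R L'] [Module R F'] [Module R T] [Module R M]

theorem exists_comp_eq_of_exact {i : L →ₗ[R] F} {p : F →ₗ[R] T} (hi : Function.Injective i)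
    (hip : Function.Exact i p) (g : M →ₗ[R] F) (hg : p ∘ₗ g = 0) :
    ∃ g' : M →ₗ[R] L, i ∘ₗ g' = g := by
  have hmem (x : M) : g x ∈ LinearMap.range i := (hip _).1 (LinearMap.congr_fun hg x)
  refine ⟨(LinearEquiv.ofInjective i hi).symm ∘ₗ g.codRestrict _ hmem, LinearMap.ext fun x ↦ ?_⟩
  exact congrArg Subtype.val ((LinearEquiv.ofInjective i hi).apply_symm_apply ⟨g x, hmem x⟩)

theorem lcomp_surjective_of_projective_presentations [Module.Projective R F]
    [Module.Projective R F'] {i : L →ₗ[R] F} {p : F →ₗ[R] T} {i' : L' →ₗ[R] F'} {p' : F' →ₗ[R] T}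
    (hi : Function.Injective i) (hip : Function.Exact i p) (hp : Function.Surjective p)
    (hip' : Function.Exact i' p') (hp' : Function.Surjective p')
    (h : Function.Surjective (i'.lcomp R M)) : Function.Surjective (i.lcomp R M) := by
  intro f
  obtain ⟨ψ, hψ⟩ := Module.projective_lifting_property p' p hp'
  obtain ⟨φ, hφ⟩ := Module.projective_lifting_property p p' hp
  obtain ⟨φL, hφL⟩ := exists_comp_eq_of_exact hi hip (φ ∘ₗ i')
    (by rw [← LinearMap.comp_assoc, hφ, hip'.linearMap_comp_eq_zero])
  obtain ⟨δ, hδ⟩ := exists_comp_eq_of_exact hi hip (φ ∘ₗ ψ - LinearMap.id)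
    (by rw [LinearMap.comp_sub, ← LinearMap.comp_assoc, hφ, hψ, LinearMap.comp_id, sub_self])
  obtain ⟨g, hg⟩ := h (f ∘ₗ φL)
  refine ⟨g ∘ₗ ψ - f ∘ₗ δ, LinearMap.ext fun x ↦ ?_⟩
  obtain ⟨y, hy⟩ := (hip' (ψ (i x))).1 (by
    rw [← LinearMap.comp_apply, hψ, hip.apply_apply_eq_zero])
  have hφy : φL y = x + δ (i x) := hi <| by
    have hφLy : i (φL y) = φ (i' y) := LinearMap.congr_fun hφL y
    have hδx : i (δ (i x)) = φ (ψ (i x)) - i x := LinearMap.congr_fun hδ (i x)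
    rw [map_add, hφLy, hδx, hy, add_sub_cancel]
  have hgy : g (i' y) = f (φL y) := LinearMap.congr_fun hg y
  simp [← hy, hgy, hφy]

end Schanuel

section Derived

variable {R : Type u} [CommRing R]

section ProjectiveResolution

variable {X : ModuleCat.{u} R} (P : ProjectiveResolution X)

theorem projectiveResolution_exact_d_rangeRestrict :
    Function.Exact (P.complex.d 2 1).hom (P.complex.d 1 0).hom.rangeRestrict := by
  have h : Function.Exact (P.complex.d 2 1).hom (P.complex.d 1 0).hom :=
    (ShortComplex.ShortExact.moduleCat_exact_iff_function_exact _).1 (P.exact_succ 0)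
  rwa [LinearMap.exact_iff, LinearMap.ker_rangeRestrict, ← LinearMap.exact_iff]

theorem projectiveResolution_exact_range_subtype_π :
    Function.Exact (LinearMap.range (P.complex.d 1 0).hom).subtype (P.π.f 0).hom := by
  have h : Function.Exact (P.complex.d 1 0).hom (P.π.f 0).hom :=
    (ShortComplex.ShortExact.moduleCat_exact_iff_function_exact _).1 P.exact₀
  rwa [LinearMap.exact_iff, Submodule.range_subtype, ← LinearMap.exact_iff]

theorem projectiveResolution_π_zero_surjective : Function.Surjective (P.π.f 0).hom :=
  (ModuleCat.epi_iff_surjective (P.π.f 0)).1 inferInstance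

theorem subsingleton_tor_one_iff_lTensor_injective (T : ModuleCat.{u} R) :
    Subsingleton (((Tor (ModuleCat.{u} R) 1).obj T).obj X) ↔
      Function.Injective ((LinearMap.range (P.complex.d 1 0).hom).subtype.lTensor T) := by
  have hexact : Subsingleton (((Tor (ModuleCat.{u} R) 1).obj T).obj X) ↔
      Function.Exact ((P.complex.d 2 1).hom.lTensor T) ((P.complex.d 1 0).hom.lTensor T) := by
    have e := P.isoLeftDerivedObj ((MonoidalCategory.tensoringLeft (ModuleCat.{u} R)).obj T) 1
    rw [← ModuleCat.isZero_iff_subsingleton]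
    refine e.isZero_iff.trans ((HomologicalComplex.exactAt_iff_isZero_homology _ _).symm.trans ?_)
    rw [HomologicalComplex.exactAt_iff' _ 2 1 0 (by simp) (by simp),
      ShortComplex.ShortExact.moduleCat_exact_iff_function_exact]
    rfl
  rw [hexact, ← exact_comp_iff_injective _
    (lTensor_exact T (projectiveResolution_exact_d_rangeRestrict P)
      (LinearMap.surjective_rangeRestrict _))
    (LinearMap.lTensor_surjective T (LinearMap.surjective_rangeRestrict _)),
    ← LinearMap.lTensor_comp]
  rfl

theorem subsingleton_ext_one_iff_lcomp_surjective (M : ModuleCat.{u} R) :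
    Subsingleton (((Ext R (ModuleCat.{u} R) 1).obj (Opposite.op X)).obj M) ↔
      Function.Surjective ((LinearMap.range (P.complex.d 1 0).hom).subtype.lcomp R M) := by
  have hexact : Subsingleton (((Ext R (ModuleCat.{u} R) 1).obj (Opposite.op X)).obj M) ↔
      Function.Exact ((P.complex.d 1 0).hom.lcomp R M) ((P.complex.d 2 1).hom.lcomp R M) := by
    rw [← ModuleCat.isZero_iff_subsingleton]
    refine (P.isoExt 1 M).isZero_iff.trans
      ((HomologicalComplex.exactAt_iff_isZero_homology _ _).symm.trans ?_)
    rw [HomologicalComplex.exactAt_iff' _ 0 1 2 (by simp) (by simp),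
      ShortComplex.ShortExact.moduleCat_exact_iff_function_exact]
    let e (n : ℕ) : (P.complex.X n →ₗ[R] M) ≃+ (P.complex.X n ⟶ M) := ModuleCat.homAddEquiv.symm
    exact Function.Exact.iff_of_ladder_addEquiv (e 0) (e 1) (e 2)
      (f₁₂ := ((P.complex.d 1 0).hom.lcomp R M).toAddMonoidHom)
      (f₂₃ := ((P.complex.d 2 1).hom.lcomp R M).toAddMonoidHom)
      (g₁₂ := ((P.complex.linearYonedaObj R M).sc' 0 1 2).f.hom.toAddMonoidHom)
      (g₂₃ := ((P.complex.linearYonedaObj R M).sc' 0 1 2).g.hom.toAddMonoidHom) rfl rfl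
  rw [hexact, ← exact_comp_iff_surjective _ (LinearMap.exact_lcomp_of_exact_of_surjective M
    (projectiveResolution_exact_d_rangeRestrict P) (LinearMap.surjective_rangeRestrict _))
    (LinearMap.lcomp_injective_of_surjective _ (LinearMap.surjective_rangeRestrict _))]
  rfl

end ProjectiveResolution

variable {L F T : Type u} [AddCommGroup L] [AddCommGroup F] [AddCommGroup T] [Module R L]
  [Module R F] [Module R T] {i : L →ₗ[R] F} {p : F →ₗ[R] T}

theorem subsingleton_tor_one_iff [Module.Flat R F] (hi : Function.Injective i)
    (hip : Function.Exact i p) (hp : Function.Surjective p) (M : Type u) [AddCommGroup M]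
    [Module R M] :
    Subsingleton (((Tor (ModuleCat.{u} R) 1).obj (ModuleCat.of R T)).obj (ModuleCat.of R M)) ↔
      Function.Injective (i.rTensor M) := by
  let P := projectiveResolution (ModuleCat.of R M)
  rw [subsingleton_tor_one_iff_lTensor_injective P]
  exact (rTensor_injective_iff_lTensor_injective hi hip hp (Submodule.subtype_injective _)
    (projectiveResolution_exact_range_subtype_π P) (projectiveResolution_π_zero_surjective P)).symm

theorem subsingleton_ext_one_iff [Module.Projective R F] (hi : Function.Injective i)
    (hip : Function.Exact i p) (hp : Function.Surjective p) (M : Type u) [AddCommGroup M]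
    [Module R M] :
    Subsingleton (((Ext R (ModuleCat.{u} R) 1).obj (Opposite.op (ModuleCat.of R T))).obj
      (ModuleCat.of R M)) ↔ Function.Surjective (i.lcomp R M) := by
  let P := projectiveResolution (ModuleCat.of R T)
  rw [subsingleton_ext_one_iff_lcomp_surjective P]
  have hexact := projectiveResolution_exact_range_subtype_π P
  have hπ := projectiveResolution_π_zero_surjective P
  exact ⟨lcomp_surjective_of_projective_presentations hi hip hp hexact hπ,
    lcomp_surjective_of_projective_presentations (Submodule.subtype_injective _) hexact hπ hip hp⟩

end Derived

section NonnilIdeals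

variable {R : Type u} [CommRing R]

theorem isPhiTorsion_quotient {I : Ideal R} (hI : ¬ I ≤ nilradical R) : IsPhiTorsion R (R ⧸ I) :=
  fun t ↦ ⟨I, hI, fun _ ha ↦ Module.mem_annihilator.1 (Ideal.annihilator_quotient.ge ha) t⟩

section PhiTorsion

variable {L F M : Type*} {T : Type u} [AddCommGroup L] [AddCommGroup F] [AddCommGroup T]
  [AddCommGroup M] [Module R L] [Module R F] [Module R T] [Module R M] {i : L →ₗ[R] F}
  {p : F →ₗ[R] T}

theorem lcomp_surjective_of_isPhiTorsion (hT : IsPhiTorsion R T) (hi : Function.Injective i)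
    (hip : Function.Exact i p)
    (hM : ∀ I : Ideal R, ¬ I ≤ nilradical R → Function.Surjective (I.subtype.lcomp R M)) :
    Function.Surjective (i.lcomp R M) := by
  refine lcomp_surjective_of_colon_le i hi fun y J hJ ↦ ?_
  obtain ⟨I, hI, hIy⟩ := hT (p y)
  refine hM J fun hJnil ↦ hI fun a ha ↦ hJnil (hJ ?_)
  rw [Submodule.mem_colon_singleton, LinearMap.mem_range]
  exact (hip _).1 (by rw [map_smul, hIy a ha])

theorem rTensor_injective_of_isPhiTorsion (hT : IsPhiTorsion R T) (hi : Function.Injective i)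
    (hip : Function.Exact i p)
    (hM : ∀ I : Ideal R, ¬ I ≤ nilradical R → Function.Injective (I.subtype.rTensor M)) :
    Function.Injective (i.rTensor M) := by
  simp_rw [rTensor_injective_iff_lcomp_surjective] at hM ⊢
  exact lcomp_surjective_of_isPhiTorsion hT hi hip hM

end PhiTorsion

theorem isNonnilInjective_iff {M : Type u} [AddCommGroup M] [Module R M] :
    IsNonnilInjective R M ↔
      ∀ I : Ideal R, ¬ I ≤ nilradical R → Function.Surjective (I.subtype.lcomp R M) := by
  refine ⟨fun h I hI ↦ ?_, fun h T _ _ hT ↦ ?_⟩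
  · exact (subsingleton_ext_one_iff I.subtype_injective (LinearMap.exact_subtype_mkQ I)
      I.mkQ_surjective M).1 (h _ (isPhiTorsion_quotient hI))
  · let p : (T →₀ R) →ₗ[R] T := Finsupp.linearCombination R id
    have hi := (LinearMap.ker p).subtype_injective
    have hip := p.exact_subtype_ker_map
    exact (subsingleton_ext_one_iff (L := LinearMap.ker p) (p := p) hi hip
      (Finsupp.linearCombination_id_surjective R T) M).2
      (lcomp_surjective_of_isPhiTorsion (L := LinearMap.ker p) hT hi hip h)

theorem isPhiFlat_iff {M : Type u} [AddCommGroup M] [Module R M] :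
    IsPhiFlat R M ↔
      ∀ I : Ideal R, ¬ I ≤ nilradical R → Function.Injective (I.subtype.rTensor M) := by
  refine ⟨fun h I hI ↦ ?_, fun h T _ _ hT ↦ ?_⟩
  · exact (subsingleton_tor_one_iff I.subtype_injective (LinearMap.exact_subtype_mkQ I)
      I.mkQ_surjective M).1 (h _ (isPhiTorsion_quotient hI))
  · let p : (T →₀ R) →ₗ[R] T := Finsupp.linearCombination R id
    have hi := (LinearMap.ker p).subtype_injective
    have hip := p.exact_subtype_ker_map
    exact (subsingleton_tor_one_iff (L := LinearMap.ker p) (p := p) hi hip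
      (Finsupp.linearCombination_id_surjective R T) M).2
      (rTensor_injective_of_isPhiTorsion (L := LinearMap.ker p) hT hi hip h)

theorem isPhiFlat_iff_isNonnilInjective_characterModule {M : Type u} [AddCommGroup M]
    [Module R M] : IsPhiFlat R M ↔ IsNonnilInjective R (CharacterModule M) := by
  simp_rw [isPhiFlat_iff, isNonnilInjective_iff, rTensor_injective_iff_lcomp_surjective]

theorem isPhiFlat_of_flat (M : Type u) [AddCommGroup M] [Module R M] [Module.Flat R M] :
    IsPhiFlat R M :=
  isPhiFlat_iff.2 fun I _ ↦ Module.Flat.rTensor_preserves_injective_linearMap _ I.subtype_injective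

theorem IsNonnilInjective.pi {M : Type u} [AddCommGroup M] [Module R M]
    (hM : IsNonnilInjective R M) (X : Type u) : IsNonnilInjective R (X → M) := by
  rw [isNonnilInjective_iff] at hM ⊢
  intro I hI g
  choose f hf using fun x ↦ hM I hI (LinearMap.proj x ∘ₗ g)
  exact ⟨LinearMap.pi f, LinearMap.ext fun a ↦ funext fun x ↦ LinearMap.congr_fun (hf x) a⟩

end NonnilIdeals

section Bidual

variable (R : Type*) [CommRing R]

/-- The evaluation map from a module to its double character module, a pure embedding along which
φ-flatness descends. -/
def characterBidual (M : Type*) [AddCommGroup M] [Module R M] :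
    M →ₗ[R] CharacterModule (CharacterModule M) where
  toFun m :=
    { toFun := fun c ↦ c m
      map_zero' := rfl
      map_add' := fun _ _ ↦ rfl }
  map_add' a b := by ext c; exact map_add c a b
  map_smul' _ _ := rfl

theorem characterBidual_lTensor_injective (N M : Type*) [AddCommGroup N] [AddCommGroup M]
    [Module R N] [Module R M] : Function.Injective ((characterBidual R M).lTensor N) := by
  rw [LinearMap.lTensor_inj_iff_rTensor_inj, rTensor_injective_iff_lcomp_surjective]
  exact fun g ↦ ⟨CharacterModule.dual (CharacterModule.dual g ∘ₗ characterBidual R N), rfl⟩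

variable {R}

theorem rTensor_injective_of_pure {A A' M M' : Type*} [AddCommGroup A] [AddCommGroup A']
    [AddCommGroup M] [AddCommGroup M'] [Module R A] [Module R A'] [Module R M] [Module R M']
    (u : A →ₗ[R] A') (f : M →ₗ[R] M') (hf : Function.Injective (f.lTensor A))
    (hu : Function.Injective (u.rTensor M')) : Function.Injective (u.rTensor M) := by
  refine .of_comp (f := f.lTensor A') ?_
  have hcomm : f.lTensor A' ∘ u.rTensor M = u.rTensor M' ∘ f.lTensor A :=
    funext fun z ↦ (rTensor_lTensor_apply_comm u f z).symm
  exact hcomm ▸ hu.comp hf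

end Bidual

theorem isPhiFlat_of_characterModule_characterModule {R M : Type u} [CommRing R]
    [AddCommGroup M] [Module R M] (h : IsPhiFlat R (CharacterModule (CharacterModule M))) :
    IsPhiFlat R M :=
  isPhiFlat_iff.2 fun I hI ↦ rTensor_injective_of_pure I.subtype (characterBidual R M)
    (characterBidual_lTensor_injective R I M) (isPhiFlat_iff.1 h I hI)

theorem rTensor_subtype_injective_of_fg {R F M : Type*} [CommRing R] [AddCommGroup F]
    [AddCommGroup M] [Module R F] [Module R M] {N₀ N : Submodule R F} (hN₀ : N₀.FG) (hle : N₀ ≤ N)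
    (h : ∀ N' : Submodule R F, N'.FG → N₀ ≤ N' → Function.Injective (N'.subtype.rTensor M)) :
    Function.Injective (N.subtype.rTensor M) := by
  refine (injective_iff_map_eq_zero _).2 fun z hz ↦ ?_
  obtain ⟨J, hJ, hJN, y, rfl⟩ := Submodule.exists_fg_le_eq_rTensor_inclusion z
  have hle' : N₀ ⊔ J ≤ N := sup_le hle hJN
  have hy : (Submodule.inclusion (le_sup_right : J ≤ N₀ ⊔ J)).rTensor M y = 0 := by
    refine h _ (hN₀.sup hJ) le_sup_left ?_
    rw [map_zero, ← hz, ← LinearMap.comp_apply, ← LinearMap.comp_apply, ← LinearMap.rTensor_comp,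
      ← LinearMap.rTensor_comp]
    rfl
  have hcomp : Submodule.inclusion hJN =
      Submodule.inclusion hle' ∘ₗ Submodule.inclusion le_sup_right := rfl
  rw [hcomp, LinearMap.rTensor_comp, LinearMap.comp_apply, hy, map_zero]

theorem isPhiFlat_of_fg {R M : Type u} [CommRing R] [AddCommGroup M] [Module R M]
    (h : ∀ I : Ideal R, I.FG → ¬ I ≤ nilradical R → Function.Injective (I.subtype.rTensor M)) :
    IsPhiFlat R M := by
  refine isPhiFlat_iff.2 fun I hI ↦ ?_
  obtain ⟨x, hxI, hx⟩ := SetLike.not_le_iff_exists.1 hI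
  have hxI' : Ideal.span {x} ≤ I := (Ideal.span_singleton_le_iff_mem I).2 hxI
  refine rTensor_subtype_injective_of_fg (Submodule.fg_span_singleton x) hxI'
    fun J hJ hxJ ↦ h J hJ fun hJnil ↦ hx (hJnil (hxJ (Ideal.mem_span_singleton_self x)))
section Coherence

theorem mem_span_range_of_forall_smul_eq_sum {R B ι κ : Type*} [CommRing R] [AddCommGroup B]
    [Module R B] [Finite ι] [Fintype κ] (f : R →ₗ[R] B) (ρ : κ → ι → R)
    (hf : Function.Injective (f.rTensor ((ι → R) ⧸ Submodule.span R (Set.range ρ))))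
    (k : ι → R) (y : κ → B) (h : ∀ i, k i • f 1 = ∑ j, ρ j i • y j) :
    k ∈ Submodule.span R (Set.range ρ) := by
  classical
  have := Fintype.ofFinite ι
  let S := Submodule.span R (Set.range ρ)
  have hρ (j : κ) : S.mkQ (ρ j) = 0 :=
    (Submodule.Quotient.mk_eq_zero S).2 (Submodule.subset_span ⟨j, rfl⟩)
  have hk : f 1 ⊗ₜ[R] k = ∑ j, y j ⊗ₜ[R] ρ j := by
    apply (TensorProduct.piScalarRight R R B ι).injective
    ext i
    simp [TensorProduct.piScalarRight_apply, h]
  have hfk : f.rTensor ((ι → R) ⧸ S) (1 ⊗ₜ[R] S.mkQ k) = 0 := by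
    rw [LinearMap.rTensor_tmul, ← LinearMap.lTensor_tmul, hk]
    simp [hρ]
  have hmk : S.mkQ k = 0 := by
    simpa using congrArg (TensorProduct.lid R _) ((injective_iff_map_eq_zero _).1 hf _ hfk)
  exact (Submodule.Quotient.mk_eq_zero S).1 hmk

theorem finitePresentation_of_piRightHom_injective {R : Type u} [CommRing R] {M : Type*}
    {B : Type*} [AddCommGroup M] [Module R M] [AddCommGroup B] [Module R B] [Module.Finite R M]
    (f : R →ₗ[R] B) (hf : ∀ (N : Type u) [AddCommGroup N] [Module R N],
      Function.Injective (f.rTensor N))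
    (h : ∀ X : Type u, Function.Injective (TensorProduct.piRightHom R R M fun _ : X ↦ B)) :
    Module.FinitePresentation R M := by
  classical
  obtain ⟨n, a, ha⟩ := Module.Finite.exists_fin (R := R) (M := M)
  let π : (Fin n → R) →ₗ[R] M := Fintype.linearCombination R a
  have hπ : Function.Surjective π := by
    rw [← LinearMap.range_eq_top, Fintype.range_linearCombination, ha]
  refine Module.finitePresentation_of_surjective π hπ ?_
  -- The family `x` is indexed by all relations between the `a i`, so that a single vanishing of
  -- `∑ a i ⊗ x i` yields generators of the whole relation module.
  let x (i : Fin n) (k : LinearMap.ker π) : B := k.1 i • f 1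
  have hx : ∑ i, a i ⊗ₜ[R] x i = 0 := by
    refine (injective_iff_map_eq_zero _).1 (h (LinearMap.ker π)) _ (funext fun k ↦ ?_)
    have hk : ∑ i, (k.1 i • a i) ⊗ₜ[R] f 1 = 0 := by
      rw [← TensorProduct.sum_tmul, show ∑ i, k.1 i • a i = 0 from k.2, TensorProduct.zero_tmul]
    simpa [x, TensorProduct.smul_tmul] using hk
  obtain ⟨l, r, y, hxy, hr⟩ := TensorProduct.vanishesTrivially_of_sum_tmul_eq_zero R ha hx
  let ρ (j : Fin l) (i : Fin n) : R := r i j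
  suffices hker : LinearMap.ker π = Submodule.span R (Set.range ρ) by
    exact hker ▸ Submodule.fg_span (Set.finite_range ρ)
  refine le_antisymm (fun k hk ↦ ?_) (Submodule.span_le.2 (Set.range_subset_iff.2 hr))
  refine mem_span_range_of_forall_smul_eq_sum f ρ (hf _) k (fun j ↦ y j ⟨k, hk⟩) fun i ↦ ?_
  simpa [x] using congrFun (hxy i) ⟨k, hk⟩

theorem piRightHom_injective_of_rTensor_injective {R B X : Type*} [CommRing R] [AddCommGroup B]
    [Module R B] {I : Ideal R} (hI : Function.Injective (I.subtype.rTensor (X → B))) :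
    Function.Injective (TensorProduct.piRightHom R R I fun _ : X ↦ B) := by
  have hcomm : (TensorProduct.lid R (X → B)).toLinearMap ∘ₗ I.subtype.rTensor (X → B) =
      LinearMap.pi (fun x ↦ (TensorProduct.lid R B).toLinearMap ∘ₗ I.subtype.rTensor B ∘ₗ
        LinearMap.proj x) ∘ₗ TensorProduct.piRightHom R R I fun _ : X ↦ B :=
    TensorProduct.ext' fun a g ↦ by ext x; simp
  refine .of_comp (f := LinearMap.pi fun x ↦ (TensorProduct.lid R B).toLinearMap ∘ₗ
    I.subtype.rTensor B ∘ₗ LinearMap.proj x) ?_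
  rw [← LinearMap.coe_comp, ← hcomm]
  exact (TensorProduct.lid R (X → B)).injective.comp hI

theorem isNonnilCoherent_of_isNonnilInjective_imp_isPhiFlat {R : Type u} [CommRing R]
    (h : ∀ (M : Type u) [AddCommGroup M] [Module R M], IsNonnilInjective R M → IsPhiFlat R M) :
    IsNonnilCoherent R := by
  intro I hIfg hI
  have : Module.Finite R I := Module.Finite.iff_fg.2 hIfg
  have hdual : IsNonnilInjective R (CharacterModule R) :=
    isPhiFlat_iff_isNonnilInjective_characterModule.1 (isPhiFlat_of_flat R)
  have hbidual : IsNonnilInjective R (CharacterModule (CharacterModule R)) :=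
    isPhiFlat_iff_isNonnilInjective_characterModule.1 (h _ hdual)
  refine finitePresentation_of_piRightHom_injective (characterBidual R R)
    (fun N _ _ ↦ (LinearMap.lTensor_inj_iff_rTensor_inj N _).1
      (characterBidual_lTensor_injective R N R))
    fun X ↦ piRightHom_injective_of_rTensor_injective (isPhiFlat_iff.1 (h _ (hbidual.pi X)) I hI)

end Coherence

section CharacterModuleOfHom

variable {R A A' B C : Type*} [CommRing R] [AddCommGroup A] [AddCommGroup A'] [AddCommGroup B]
  [AddCommGroup C] [Module R A] [Module R A'] [Module R B] [Module R C]

theorem exact_characterModule_dual {f : A →ₗ[R] B} {g : B →ₗ[R] C} (hfg : Function.Exact f g) :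
    Function.Exact (CharacterModule.dual g) (CharacterModule.dual f) := by
  intro c
  refine ⟨fun hc ↦ ?_, ?_⟩
  · have hle : g.rangeRestrict.toAddMonoidHom.ker ≤ AddMonoidHom.ker c := by
      intro b hb
      obtain ⟨a, rfl⟩ := (hfg b).1 (congrArg Subtype.val hb)
      exact DFunLike.congr_fun hc a
    let c₀ : CharacterModule (LinearMap.range g) := AddMonoidHom.liftOfSurjective
      g.rangeRestrict.toAddMonoidHom g.surjective_rangeRestrict ⟨c, hle⟩
    obtain ⟨c', hc'⟩ := CharacterModule.dual_surjective_of_injective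
      (LinearMap.range g).subtype (Submodule.subtype_injective _) c₀
    refine ⟨c', CharacterModule.ext _ fun b ↦ (DFunLike.congr_fun hc' (g.rangeRestrict b)).trans ?_⟩
    exact AddMonoidHom.liftOfRightInverse_comp_apply _ _ _ ⟨c, hle⟩ b
  · rintro ⟨c, rfl⟩
    rw [← LinearMap.comp_apply, ← CharacterModule.dual_comp, hfg.linearMap_comp_eq_zero,
      CharacterModule.dual_zero, LinearMap.zero_apply]

variable (R A) (E : Type*) [AddCommGroup E] [Module R E]

/-- The natural map `A ⊗ E⁺ → Hom(A, E)⁺` sending `a ⊗ c` to `φ ↦ c (φ a)`, where `(-)⁺` is the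
character module. It compares `rTensor` with values in `E⁺` to `lcomp` with values in `E`. -/
noncomputable def tensorCharacterModuleEval :
    A ⊗[R] CharacterModule E →ₗ[R] CharacterModule (A →ₗ[R] E) :=
  TensorProduct.lift
    { toFun := fun a ↦ CharacterModule.dual (LinearMap.applyₗ a)
      map_add' := fun a b ↦ by
        ext c φ; exact (congrArg c (map_add φ a b)).trans (map_add c _ _)
      map_smul' := fun r a ↦ by ext c φ; exact congrArg c (map_smul φ r a) }

variable {R A}

theorem tensorCharacterModuleEval_rTensor (u : A →ₗ[R] A') (z : A ⊗[R] CharacterModule E) :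
    tensorCharacterModuleEval R A' E (u.rTensor _ z) =
      CharacterModule.dual (u.lcomp R E) (tensorCharacterModuleEval R A E z) := by
  simp only [← LinearMap.comp_apply]
  refine LinearMap.congr_fun (TensorProduct.ext' fun a c ↦ ?_) z
  rfl

theorem tensorCharacterModuleEval_bijective_of_pi (ι : Type*) [Finite ι] :
    Function.Bijective (tensorCharacterModuleEval R (ι → R) E) := by
  classical
  have := Fintype.ofFinite ι
  let s (i : ι) : E →ₗ[R] (ι → R) →ₗ[R] E := LinearMap.smulRightₗ (LinearMap.proj i)
  let g : CharacterModule ((ι → R) →ₗ[R] E) →ₗ[R] ι → CharacterModule E :=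
    LinearMap.pi fun i ↦ CharacterModule.dual (s i)
  have hg : Function.Injective g := by
    refine (injective_iff_map_eq_zero g).2 fun c hc ↦ CharacterModule.ext _ fun φ ↦ ?_
    have hφ : φ = ∑ i, s i (φ (Pi.single i 1)) := by ext i; simp [s, Pi.single_apply]
    rw [hφ]
    exact (map_sum c _ _).trans (Finset.sum_eq_zero fun i _ ↦ DFunLike.congr_fun (congrFun hc i) _)
  let e := TensorProduct.comm R (ι → R) (CharacterModule E) ≪≫ₗ
    TensorProduct.piScalarRight R R (CharacterModule E) ι
  have hcomp : g ∘ₗ tensorCharacterModuleEval R (ι → R) E = e.toLinearMap :=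
    TensorProduct.ext' fun a c ↦ rfl
  have hbij : Function.Bijective (g ∘ tensorCharacterModuleEval R (ι → R) E) := by
    rw [← LinearMap.coe_comp, hcomp]
    exact e.bijective
  exact ⟨hbij.injective.of_comp, hbij.surjective.of_comp_left hg⟩

theorem tensorCharacterModuleEval_injective [Module.FinitePresentation R A] :
    Function.Injective (tensorCharacterModuleEval R A E) := by
  obtain ⟨n, m, π, σ, hπ, hσπ⟩ := Module.FinitePresentation.exists_fin' R A
  refine (injective_iff_map_eq_zero _).2 fun z hz ↦ ?_
  obtain ⟨y, rfl⟩ := LinearMap.rTensor_surjective _ hπ z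
  rw [tensorCharacterModuleEval_rTensor] at hz
  obtain ⟨w, hw⟩ := (exact_characterModule_dual
    (LinearMap.exact_lcomp_of_exact_of_surjective E hσπ hπ) _).1 hz
  obtain ⟨w, rfl⟩ := (tensorCharacterModuleEval_bijective_of_pi E (Fin m)).surjective w
  rw [← tensorCharacterModuleEval_rTensor] at hw
  rw [← (tensorCharacterModuleEval_bijective_of_pi E (Fin n)).injective hw]
  exact (rTensor_exact _ hσπ hπ).apply_apply_eq_zero w

variable {E}

theorem rTensor_characterModule_injective_of_lcomp_surjective [Module.FinitePresentation R A]
    {u : A →ₗ[R] A'} (hu : Function.Surjective (u.lcomp R E)) :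
    Function.Injective (u.rTensor (CharacterModule E)) := by
  refine .of_comp (f := tensorCharacterModuleEval R A' E) ?_
  rw [show _ ∘ _ = CharacterModule.dual (u.lcomp R E) ∘ tensorCharacterModuleEval R A E from
    funext (tensorCharacterModuleEval_rTensor E u)]
  exact (CharacterModule.dual_injective_of_surjective _ hu).comp
    (tensorCharacterModuleEval_injective E)

end CharacterModuleOfHom

section NilradicalOfLocalization

variable {R : Type*} [CommRing R] (S : Submonoid R) (A : Type*) [CommRing A] [Algebra R A]
  [IsLocalization S A]

include S in
theorem map_nilradical_of_isLocalization :
    (nilradical R).map (algebraMap R A) = nilradical A := by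
  rw [nilradical, IsLocalization.map_radical S, Ideal.zero_eq_bot, Ideal.map_bot]
  rfl

theorem disjoint_nilradical_of_isLocalization [Nontrivial A] :
    Disjoint (S : Set R) (nilradical R) :=
  Set.disjoint_left.2 fun s hs hn ↦ ((mem_nilradical.1 hn).map (algebraMap R A)).not_isUnit
    (IsLocalization.map_units A ⟨s, hs⟩)

include S in
theorem under_nilradical_of_isLocalization [Nontrivial A] (hR : (nilradical R).IsPrime) :
    (nilradical A).under R = nilradical R := by
  rw [← map_nilradical_of_isLocalization S A]
  exact IsLocalization.under_map_of_isPrime_disjoint S A hR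
    (disjoint_nilradical_of_isLocalization S A)

include S in
theorem map_le_nilradical_iff [Nontrivial A] (hR : (nilradical R).IsPrime) {I : Ideal R} :
    I.map (algebraMap R A) ≤ nilradical A ↔ I ≤ nilradical R := by
  rw [Ideal.map_le_iff_le_comap]
  exact (under_nilradical_of_isLocalization S A hR).symm ▸ Iff.rfl

end NilradicalOfLocalization

theorem IsPhiRing.of_isLocalization {R A : Type u} [CommRing R] (hR : IsPhiRing R)
    (S : Submonoid R) [CommRing A] [Algebra R A] [IsLocalization S A] [Nontrivial A] :
    IsPhiRing A := by
  refine ⟨?_, fun z hz ↦ ?_⟩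
  · rw [← map_nilradical_of_isLocalization S A]
    exact IsLocalization.isPrime_of_isPrime_disjoint S A _ hR.1
      (disjoint_nilradical_of_isLocalization S A)
  · obtain ⟨x, s, rfl⟩ := IsLocalization.exists_mk'_eq S z
    have hx : x ∉ nilradical R := fun hx ↦ hz <| IsLocalization.mk'_mem_iff.2 <|
      map_nilradical_of_isLocalization S A ▸ Ideal.mem_map_of_mem _ hx
    calc nilradical A = (nilradical R).map (algebraMap R A) :=
          (map_nilradical_of_isLocalization S A).symm
      _ ≤ (Ideal.span {x}).map (algebraMap R A) := Ideal.map_mono (hR.2 x hx)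
      _ = Ideal.span {algebraMap R A x} := by rw [Ideal.map_span, Set.image_singleton]
      _ ≤ Ideal.span {IsLocalization.mk' A x s} :=
          Ideal.span_singleton_le_span_singleton.2 ⟨_, (IsLocalization.mk'_spec A x s).symm⟩

section BaseChange

variable {R A M M' P P' : Type*} [CommRing R] [CommRing A] [Algebra R A]
  [AddCommGroup M] [Module R M] [AddCommGroup P] [Module R P]
  [AddCommGroup M'] [Module R M'] [Module A M'] [IsScalarTower R A M']
  [AddCommGroup P'] [Module R P'] [Module A P'] [IsScalarTower R A P']

theorem lcomp_surjective_iff_of_isBaseChange {f : M →ₗ[R] M'} {g : P →ₗ[R] P'}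
    (hf : IsBaseChange A f) (hg : IsBaseChange A g) {u : M →ₗ[R] P} {u' : M' →ₗ[A] P'}
    (hu : ∀ x, u' (f x) = g (u x)) (N : Type*) [AddCommGroup N] [Module R N] [Module A N]
    [IsScalarTower R A N] :
    Function.Surjective (u.lcomp R N) ↔ Function.Surjective (u'.lcomp A N) := by
  refine ⟨fun h φ ↦ ?_, fun h φ ↦ ?_⟩
  · obtain ⟨ψ, hψ⟩ := h (φ.restrictScalars R ∘ₗ f)
    refine ⟨hg.lift ψ, hf.algHom_ext _ _ fun x ↦ ?_⟩
    rw [LinearMap.lcomp_apply, hu, hg.lift_eq]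
    exact DFunLike.congr_fun hψ x
  · obtain ⟨ψ, hψ⟩ := h (hf.lift φ)
    refine ⟨ψ.restrictScalars R ∘ₗ g, LinearMap.ext fun x ↦ ?_⟩
    rw [← hf.lift_eq φ x, ← hψ]
    exact (congrArg ψ (hu x)).symm

instance isScalarTower_characterModule {N : Type*} [AddCommGroup N] [Module R N] [Module A N]
    [IsScalarTower R A N] : IsScalarTower R A (CharacterModule N) where
  smul_assoc r a c := CharacterModule.ext _ fun x ↦ by
    change c ((r • a) • x) = c (a • r • x)
    rw [Algebra.smul_def, mul_comm, mul_smul, algebraMap_smul]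

end BaseChange

section Localization

variable {R : Type*} [CommRing R] (S : Submonoid R) {A : Type*} [CommRing A] [Algebra R A]
  [IsLocalization S A]

include S in
theorem lcomp_subtype_surjective_iff_map (I : Ideal R) (N : Type*) [AddCommGroup N] [Module R N]
    [Module A N] [IsScalarTower R A N] :
    Function.Surjective (I.subtype.lcomp R N) ↔
      Function.Surjective ((I.map (algebraMap R A)).subtype.lcomp A N) :=
  lcomp_surjective_iff_of_isBaseChange
    (IsLocalizedModule.isBaseChange S A (Algebra.idealMap A I)) (IsBaseChange.linearMap R A)
    (fun _ ↦ rfl) N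

theorem lcomp_surjective_of_isLocalizedModule {L F E E' : Type*} [AddCommGroup L] [AddCommGroup F]
    [AddCommGroup E] [AddCommGroup E'] [Module R L] [Module R F] [Module R E] [Module R E']
    [Module.FinitePresentation R L] {u : L →ₗ[R] F} (f : E →ₗ[R] E') [IsLocalizedModule S f]
    (hu : Function.Surjective (u.lcomp R E)) : Function.Surjective (u.lcomp R E') := by
  intro φ
  obtain ⟨ψ, s, hψ⟩ := Module.FinitePresentation.exists_lift_of_isLocalizedModule S f φ
  obtain ⟨χ, rfl⟩ := hu ψ
  have hs := (Module.End.isUnit_iff _).1 (IsLocalizedModule.map_units f s)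
  let e := LinearEquiv.ofBijective (algebraMap R (Module.End R E') s) hs
  refine ⟨e.symm ∘ₗ f ∘ₗ χ, LinearMap.ext fun x ↦ e.symm_apply_eq.2 ?_⟩
  exact DFunLike.congr_fun hψ x

include S in
theorem exists_fg_map_eq_of_isLocalization {J : Ideal A} (hJ : J.FG) :
    ∃ I : Ideal R, I.FG ∧ I.map (algebraMap R A) = J := by
  classical
  rw [← IsLocalization.map_under S A J, Ideal.map, Ideal.span] at hJ
  obtain ⟨t, ht, hJt⟩ := Submodule.fg_span_iff_fg_span_finset_subset _ |>.1 hJ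
  obtain ⟨t, -, rfl⟩ := Finset.subset_set_image_iff.1 ht
  refine ⟨Ideal.span t, ⟨t, rfl⟩, ?_⟩
  rw [Ideal.map_span, ← Finset.coe_image]
  exact hJt.symm.trans (IsLocalization.map_under S A J)

end Localization

theorem rTensor_injective_of_localized_maximal {R L F E : Type*} [CommRing R] [AddCommGroup L]
    [AddCommGroup F] [AddCommGroup E] [Module R L] [Module R F] [Module R E] {u : L →ₗ[R] F}
    (h : ∀ (m : Ideal R) [m.IsMaximal],
      Function.Injective (u.rTensor (LocalizedModule m.primeCompl E))) :
    Function.Injective (u.rTensor E) := by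
  simp_rw [← LinearMap.lTensor_inj_iff_rTensor_inj, ← AlgebraTensorModule.coe_lTensor (A := R)]
    at h ⊢
  refine injective_of_isLocalized_maximal _
    (fun m ↦ AlgebraTensorModule.rTensor R L (LocalizedModule.mkLinearMap m.primeCompl E)) _
    (fun m ↦ AlgebraTensorModule.rTensor R F (LocalizedModule.mkLinearMap m.primeCompl E)) _
    fun m hm ↦ ?_
  simpa only [IsLocalizedModule.map_lTensor] using h m

theorem isPhiFlat_of_localized_maximal {R E : Type u} [CommRing R] [AddCommGroup E] [Module R E]
    (h : ∀ (m : Ideal R) [m.IsMaximal], IsPhiFlat R (LocalizedModule m.primeCompl E)) :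
    IsPhiFlat R E :=
  isPhiFlat_iff.2 fun I hI ↦
    rTensor_injective_of_localized_maximal fun m _ ↦ isPhiFlat_iff.1 (h m) I hI

section PhiLocalization

variable {R : Type u} [CommRing R] (hR : (nilradical R).IsPrime) (S : Submonoid R) (A : Type u)
  [CommRing A] [Nontrivial A] [Algebra R A] [IsLocalization S A]

include hR S in
theorem isNonnilInjective_iff_of_isLocalization {N : Type u} [AddCommGroup N] [Module R N]
    [Module A N] [IsScalarTower R A N] : IsNonnilInjective R N ↔ IsNonnilInjective A N := by
  rw [isNonnilInjective_iff, isNonnilInjective_iff]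
  refine ⟨fun h J hJ ↦ ?_, fun h I hI ↦ ?_⟩
  · rw [← IsLocalization.map_under S A J] at hJ ⊢
    exact (lcomp_subtype_surjective_iff_map S _ N).1
      (h _ (mt (map_le_nilradical_iff S A hR).2 hJ))
  · exact (lcomp_subtype_surjective_iff_map S I N).2
      (h _ (mt (map_le_nilradical_iff S A hR).1 hI))

include hR S in
theorem isPhiFlat_iff_of_isLocalization {N : Type u} [AddCommGroup N] [Module R N]
    [Module A N] [IsScalarTower R A N] : IsPhiFlat R N ↔ IsPhiFlat A N := by
  rw [isPhiFlat_iff_isNonnilInjective_characterModule,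
    isPhiFlat_iff_isNonnilInjective_characterModule,
    isNonnilInjective_iff_of_isLocalization hR S A]

include hR S in
theorem isNonnilInjective_imp_isPhiFlat_of_isLocalization
    (h : ∀ (M : Type u) [AddCommGroup M] [Module R M], IsNonnilInjective R M → IsPhiFlat R M)
    (M : Type u) [AddCommGroup M] [Module A M] (hM : IsNonnilInjective A M) : IsPhiFlat A M := by
  let : Module R M := Module.compHom M (algebraMap R A)
  have : IsScalarTower R A M := .of_algebraMap_smul fun _ _ ↦ rfl
  rw [← isPhiFlat_iff_of_isLocalization hR S A]
  exact h M ((isNonnilInjective_iff_of_isLocalization hR S A).2 hM)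

include hR in
theorem lcomp_subtype_surjective_of_isLocalizedModule (hc : IsNonnilCoherent R) {E E' : Type u}
    [AddCommGroup E] [Module R E] (hE : IsNonnilInjective R E) [AddCommGroup E'] [Module R E']
    [Module A E'] [IsScalarTower R A E'] (f : E →ₗ[R] E') [IsLocalizedModule S f] {J : Ideal A}
    (hJ : J.FG) (hJn : ¬ J ≤ nilradical A) : Function.Surjective (J.subtype.lcomp A E') := by
  obtain ⟨I, hI, rfl⟩ := exists_fg_map_eq_of_isLocalization S hJ
  rw [map_le_nilradical_iff S A hR] at hJn
  have := hc I hI hJn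
  exact (lcomp_subtype_surjective_iff_map S I E').1
    (lcomp_surjective_of_isLocalizedModule S f (isNonnilInjective_iff.1 hE I hJn))

include hR in
theorem isPhiFlat_of_isLocalizedModule (hc : IsNonnilCoherent R)
    (h : ∀ (M : Type u) [AddCommGroup M] [Module A M], IsNonnilInjective A M → IsPhiFlat A M)
    {E E' : Type u} [AddCommGroup E] [Module R E] (hE : IsNonnilInjective R E)
    [AddCommGroup E'] [Module R E'] [Module A E'] [IsScalarTower R A E'] (f : E →ₗ[R] E')
    [IsLocalizedModule S f] : IsPhiFlat R E' := by
  have hchar : IsPhiFlat A (CharacterModule E') := isPhiFlat_of_fg fun J hJ hJn ↦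
    have := isNonnilCoherent_of_isNonnilInjective_imp_isPhiFlat h J hJ hJn
    rTensor_characterModule_injective_of_lcomp_surjective
      (lcomp_subtype_surjective_of_isLocalizedModule hR S A hc hE f hJ hJn)
  have hbichar : IsPhiFlat A (CharacterModule (CharacterModule E')) :=
    h _ (isPhiFlat_iff_isNonnilInjective_characterModule.1 hchar)
  exact (isPhiFlat_iff_of_isLocalization hR S A).2
    (isPhiFlat_of_characterModule_characterModule hbichar)

end PhiLocalization

/-- A φ-ring `R` is a φ-IF ring if and only if `R` is nonnil-coherent
and the localization `R_m` is a φ-IF ring for every maximal ideal `m` of `R`. -/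
theorem phiIF_iff_nonnilCoherent_and_localizations_phiIF (R : Type u) [CommRing R]
    (hR : IsPhiRing R) :
    (∀ (M : Type u) [AddCommGroup M] [Module R M],
        IsNonnilInjective R M → IsPhiFlat R M) ↔
      (IsNonnilCoherent R ∧
        ∀ (m : Ideal R) [m.IsMaximal], IsPhiIFRing (Localization.AtPrime m)) := by
  refine ⟨fun h ↦ ⟨isNonnilCoherent_of_isNonnilInjective_imp_isPhiFlat h, fun m _ ↦ ⟨?_, ?_⟩⟩, ?_⟩
  · exact hR.of_isLocalization m.primeCompl
  · exact isNonnilInjective_imp_isPhiFlat_of_isLocalization hR.1 m.primeCompl _ h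
  · rintro ⟨hc, hloc⟩ E _ _ hE
    refine isPhiFlat_of_localized_maximal fun m _ ↦ ?_
    exact isPhiFlat_of_isLocalizedModule hR.1 m.primeCompl (Localization.AtPrime m) hc (hloc m).2 hE
      (LocalizedModule.mkLinearMap m.primeCompl E)
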